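/- For all n ≥ 1 and 0 ≤ k ≤ n-1, the generating function Σ_{w ∈ D_n, des(w)=k} q^{maj(w)} equals (1/[n]_q) * qbinom(n,k) * qbinom(n,k+1) * q^{k^2+k}. -/

import Mathlib

/-!
A left factor of a Dyck path ("ballot word") is refined by its number of letters `v`, its number of
descents, and whether it ends in `v`. Deleting the last letter (or a final `hv`, which removes a
descent at a known position) gives recurrences `ballotGF_succ` and `ballotGFv_succ_succ` for the
`maj`-generating functions.

With `e_k(n) = e_k(1, q, …, q^(n-1)) = q^(k choose 2) qbinom(n,k)` and `e_(-1) = 0`, the generating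
function for `a` steps `h` and `b + 1` steps `v`, where `a ≤ b + 1`, is
`q^(2k) (e_k(a) e_k(b) - e_(k+1)(a) e_(k-1)(b))`. This is proved in `ballotGF_closed` from the single
recurrence `e_(k+1)(n+1) = e_(k+1)(n) + q^n e_k(n)`. The formula is the two-path determinant for
pairs of sequences of valley coordinates `x_1 < ⋯ < x_k`, `y_1 < ⋯ < y_k` with `x_i ≤ y_i`. For
`a = b + 1 = n` it simplifies to the product formula by `[k+1]_q - q [k]_q = 1` (`clF_diag_mul`).
-/

open scoped Classical

open Finset

/-- The `i`-th letter (1-indexed) of a word `w`; `true` = vertical step `v`,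
`false` = horizontal step `h`; junk value `false` out of range. -/
def ltr {m : ℕ} (w : Fin m → Bool) (i : ℕ) : Bool :=
  if h : 1 ≤ i ∧ i ≤ m then w ⟨i - 1, by omega⟩ else false

/-- The number of occurrences of the letter `b` among the first `i` letters of `w`. -/
def pcnt {m : ℕ} (w : Fin m → Bool) (b : Bool) (i : ℕ) : ℕ :=
  ((Finset.Icc 1 i).filter fun j => ltr w j = b).card

/-- `w` is a Dyck path of length `2n`: `n` vertical steps and every prefix has at
least as many `v`'s as `h`'s. -/
def IsDyck (n : ℕ) (w : Fin (2 * n) → Bool) : Prop :=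
  pcnt w true (2 * n) = n ∧ ∀ i ≤ 2 * n, pcnt w false i ≤ pcnt w true i

/-- The descent (valley) set of `w`: positions `i` with `w_i = h`, `w_{i+1} = v`. -/
def Des {n : ℕ} (w : Fin (2 * n) → Bool) : Finset ℕ :=
  (Finset.Icc 1 (2 * n - 1)).filter fun i => ltr w i = false ∧ ltr w (i + 1) = true

/-- The `q`-integer `[m]_q = 1 + q + ⋯ + q^{m-1}` as a polynomial. -/
noncomputable def qInt (m : ℕ) : Polynomial ℚ :=
  ∑ i ∈ Finset.range m, Polynomial.X ^ i

/-- The `q`-factorial `[m]_q!`. -/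
noncomputable def qFact : ℕ → Polynomial ℚ
  | 0 => 1
  | m + 1 => qInt (m + 1) * qFact m

/-- Inclusion of polynomials into rational functions. -/
noncomputable def toRF (p : Polynomial ℚ) : RatFunc ℚ :=
  algebraMap (Polynomial ℚ) (RatFunc ℚ) p

/-- The Gaussian binomial coefficient `[n]_q! / ([k]_q! [n-k]_q!)`. -/
noncomputable def qbinom (n k : ℕ) : RatFunc ℚ :=
  toRF (qFact n) / (toRF (qFact k) * toRF (qFact (n - k)))

/-! ### Ballot words and their weights -/

/-- All prefixes of `w` have at least as many `v`'s as `h`'s (a left factor of a Dyck path). -/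
def IsBallot {m : ℕ} (w : Fin m → Bool) : Prop :=
  ∀ i ≤ m, pcnt w false i ≤ pcnt w true i

/-- The descent set of a word of arbitrary length. -/
def desW {m : ℕ} (w : Fin m → Bool) : Finset ℕ :=
  (Finset.Icc 1 (m - 1)).filter fun i => ltr w i = false ∧ ltr w (i + 1) = true

/-- The contribution `q^(maj w)` of `w` if it is a ballot word with `b` vertical steps and `k`
descents, and `0` otherwise. -/
noncomputable def wt {m : ℕ} (w : Fin m → Bool) (b k : ℕ) : Polynomial ℚ :=
  if IsBallot w ∧ pcnt w true m = b ∧ (desW w).card = k then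
    Polynomial.X ^ (∑ i ∈ desW w, i) else 0

/-- The `maj`-generating function of ballot words of length `m` with `b` vertical steps and `k`
descents. -/
noncomputable def ballotGF (m b k : ℕ) : Polynomial ℚ :=
  ∑ w : Fin m → Bool, wt w b k

/-- The part of `ballotGF` coming from the words whose last letter is `v`. -/
noncomputable def ballotGFv (m b k : ℕ) : Polynomial ℚ :=
  ∑ w : Fin m → Bool, if ltr w m = true then wt w b k else 0

/-! ### Appending a letter to a word -/

theorem sum_snoc {m : ℕ} (f : (Fin (m + 1) → Bool) → Polynomial ℚ) :
    ∑ w, f w = (∑ w : Fin m → Bool, f (Fin.snoc w true)) +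
      ∑ w : Fin m → Bool, f (Fin.snoc w false) := by
  rw [← (Fin.snocEquiv (fun _ : Fin (m + 1) => Bool)).sum_comp, Fintype.sum_prod_type]
  simp [Fin.snocEquiv]

theorem ltr_snoc_of_le {m : ℕ} (w : Fin m → Bool) (c : Bool) {i : ℕ} (hi : i ≤ m) :
    ltr (Fin.snoc w c : Fin (m + 1) → Bool) i = ltr w i := by
  unfold ltr
  by_cases h : 1 ≤ i
  · rw [dif_pos ⟨h, by omega⟩, dif_pos ⟨h, hi⟩]
    have : (⟨i - 1, by omega⟩ : Fin (m + 1)) = Fin.castSucc ⟨i - 1, by omega⟩ := rfl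
    rw [this, Fin.snoc_castSucc]
  · rw [dif_neg (by omega), dif_neg (by omega)]

theorem ltr_snoc_last {m : ℕ} (w : Fin m → Bool) (c : Bool) :
    ltr (Fin.snoc w c : Fin (m + 1) → Bool) (m + 1) = c := by
  unfold ltr
  rw [dif_pos ⟨by omega, le_rfl⟩]
  exact Fin.snoc_last (α := fun _ => Bool) c w

theorem pcnt_snoc_of_le {m : ℕ} (w : Fin m → Bool) (b c : Bool) {i : ℕ} (hi : i ≤ m) :
    pcnt (Fin.snoc w c : Fin (m + 1) → Bool) b i = pcnt w b i := by
  unfold pcnt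
  congr 1
  apply Finset.filter_congr
  intro j hj
  rw [ltr_snoc_of_le w c ((Finset.mem_Icc.1 hj).2.trans hi)]

theorem pcnt_succ {m : ℕ} (w : Fin m → Bool) (b : Bool) (i : ℕ) :
    pcnt w b (i + 1) = pcnt w b i + if ltr w (i + 1) = b then 1 else 0 := by
  unfold pcnt
  rw [← Finset.insert_Icc_right_eq_Icc_add_one (by omega), Finset.filter_insert]
  split_ifs
  · rw [Finset.card_insert_of_notMem (by simp)]
  · rfl

theorem pcnt_snoc_last {m : ℕ} (w : Fin m → Bool) (b c : Bool) :
    pcnt (Fin.snoc w c : Fin (m + 1) → Bool) b (m + 1) = pcnt w b m + if c = b then 1 else 0 := by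
  rw [pcnt_succ, ltr_snoc_last, pcnt_snoc_of_le w b c le_rfl]

theorem pcnt_add {m : ℕ} (w : Fin m → Bool) (i : ℕ) : pcnt w false i + pcnt w true i = i := by
  induction i with
  | zero => simp [pcnt]
  | succ i ih =>
    rw [pcnt_succ, pcnt_succ]
    cases ltr w (i + 1) <;> simp <;> omega

theorem isBallot_snoc {m : ℕ} (w : Fin m → Bool) (c : Bool) :
    IsBallot (Fin.snoc w c : Fin (m + 1) → Bool) ↔ IsBallot w ∧
      pcnt w false m + (if c = false then 1 else 0) ≤
        pcnt w true m + (if c = true then 1 else 0) := by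
  unfold IsBallot
  constructor
  · intro h
    refine ⟨fun i hi => ?_, ?_⟩
    · simpa only [pcnt_snoc_of_le _ _ _ hi] using h i (by omega)
    · simpa only [pcnt_snoc_last] using h (m + 1) le_rfl
  · rintro ⟨h1, h2⟩ i hi
    rcases Nat.lt_or_ge m i with h | h
    · obtain rfl : i = m + 1 := by omega
      simpa only [pcnt_snoc_last] using h2
    · simpa only [pcnt_snoc_of_le _ _ _ h] using h1 i h

theorem desW_snoc {m : ℕ} (w : Fin m → Bool) (c : Bool) :
    desW (Fin.snoc w c : Fin (m + 1) → Bool) =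
      if 1 ≤ m ∧ ltr w m = false ∧ c = true then insert m (desW w) else desW w := by
  have key : ∀ i, i ∈ desW (Fin.snoc w c : Fin (m + 1) → Bool) ↔
      i ∈ desW w ∨ (i = m ∧ 1 ≤ m ∧ ltr w m = false ∧ c = true) := by
    intro i
    simp only [desW, Finset.mem_filter, Finset.mem_Icc]
    rcases lt_trichotomy i m with h | rfl | h
    · rw [ltr_snoc_of_le w c h.le, ltr_snoc_of_le w c h]
      constructor
      · rintro ⟨⟨h1, h2⟩, h3⟩
        exact Or.inl ⟨⟨h1, by omega⟩, h3⟩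
      · rintro (⟨⟨h1, h2⟩, h3⟩ | ⟨h1, -⟩)
        · exact ⟨⟨h1, by omega⟩, h3⟩
        · omega
    · rw [ltr_snoc_of_le w c le_rfl, ltr_snoc_last]
      constructor
      · rintro ⟨⟨h1, h2⟩, h3⟩
        exact Or.inr ⟨rfl, h1, h3⟩
      · rintro (⟨⟨h1, h2⟩, h3⟩ | ⟨-, h1, h3⟩)
        · omega
        · exact ⟨⟨h1, by omega⟩, h3⟩
    · constructor
      · rintro ⟨⟨h1, h2⟩, h3⟩
        omega
      · rintro (⟨⟨h1, h2⟩, h3⟩ | ⟨h1, -⟩) <;> omega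
  ext i
  rw [key]
  split_ifs with h
  · rw [Finset.mem_insert]; tauto
  · tauto

theorem notMem_desW {m : ℕ} (w : Fin m → Bool) : m ∉ desW w := by
  simp only [desW, Finset.mem_filter, Finset.mem_Icc]
  omega

theorem wt_snoc_false {m : ℕ} (w : Fin m → Bool) (b k : ℕ) :
    wt (Fin.snoc w false : Fin (m + 1) → Bool) b k = if m + 1 ≤ 2 * b then wt w b k else 0 := by
  have h := pcnt_add w m
  simp only [wt, isBallot_snoc, desW_snoc, pcnt_snoc_last]
  simp only [Bool.false_eq_true, and_false, if_false, if_true, add_zero]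
  split_ifs <;> first | rfl | (exfalso; grind)

theorem wt_snoc_true_of_v {m : ℕ} (w : Fin m → Bool) (b k : ℕ) (hw : m = 0 ∨ ltr w m = true) :
    wt (Fin.snoc w true : Fin (m + 1) → Bool) (b + 1) k = wt w b k := by
  have hd : desW (Fin.snoc w true : Fin (m + 1) → Bool) = desW w := by
    rw [desW_snoc, if_neg]
    rintro ⟨h1, h2, -⟩
    rcases hw with h | h
    · omega
    · simp [h] at h2
  simp only [wt, isBallot_snoc, hd, pcnt_snoc_last]
  have hB : IsBallot w → pcnt w false m ≤ pcnt w true m := fun h => h m le_rfl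
  simp only [Bool.true_eq_false, if_false, if_true, add_zero]
  split_ifs <;> first | rfl | (exfalso; grind)

theorem wt_snoc_true_of_h_zero {m : ℕ} (w : Fin m → Bool) (b : ℕ) (hm : 1 ≤ m)
    (hw : ltr w m = false) :
    wt (Fin.snoc w true : Fin (m + 1) → Bool) (b + 1) 0 = 0 := by
  rw [wt, if_neg]
  rintro ⟨-, -, h⟩
  rw [desW_snoc, if_pos ⟨hm, hw, rfl⟩, Finset.card_insert_of_notMem (notMem_desW w)] at h
  omega

theorem wt_snoc_true_of_h {m : ℕ} (w : Fin m → Bool) (b k : ℕ) (hm : 1 ≤ m)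
    (hw : ltr w m = false) :
    wt (Fin.snoc w true : Fin (m + 1) → Bool) (b + 1) (k + 1) = Polynomial.X ^ m * wt w b k := by
  have hB : IsBallot w → pcnt w false m ≤ pcnt w true m := fun h => h m le_rfl
  simp only [wt, isBallot_snoc, pcnt_snoc_last]
  have hd : desW (Fin.snoc w true : Fin (m + 1) → Bool) = insert m (desW w) := by
    rw [desW_snoc, if_pos ⟨hm, hw, rfl⟩]
  rw [hd, Finset.card_insert_of_notMem (notMem_desW w),
    Finset.sum_insert (notMem_desW w), pow_add]
  simp only [Bool.true_eq_false, if_false, if_true, add_zero]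
  rw [mul_ite, mul_zero]
  split_ifs <;> first | rfl | (exfalso; grind)

/-! ### Recurrences for the generating functions -/

theorem ballotGF_eq_zero {m b : ℕ} (k : ℕ) (h : m < b ∨ 2 * b < m) : ballotGF m b k = 0 := by
  apply Finset.sum_eq_zero
  intro w _
  rw [wt, if_neg]
  rintro ⟨h1, h2, -⟩
  have := pcnt_add w m
  have := h1 m le_rfl
  omega

theorem ballotGFv_eq_zero {m b : ℕ} (k : ℕ) (h : m < b ∨ 2 * b < m) : ballotGFv m b k = 0 := by
  apply Finset.sum_eq_zero
  intro w _
  suffices h0 : wt w b k = 0 by rw [h0, ite_self]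
  rw [wt, if_neg]
  rintro ⟨h1, h2, -⟩
  have := pcnt_add w m
  have := h1 m le_rfl
  omega

/-- Removing a final `h`. -/
theorem ballotGF_succ (m b k : ℕ) :
    ballotGF (m + 1) b k = ballotGFv (m + 1) b k +
      if m + 1 ≤ 2 * b then ballotGF m b k else 0 := by
  simp only [ballotGF, ballotGFv]
  rw [sum_snoc, sum_snoc]
  simp only [ltr_snoc_last, wt_snoc_false, if_true, Bool.false_eq_true, if_false,
    Finset.sum_const_zero, add_zero]
  split_ifs <;> simp

theorem ballotGFv_succ_zero (m b : ℕ) :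
    ballotGFv (m + 2) (b + 1) 0 = ballotGFv (m + 1) b 0 := by
  simp only [ballotGFv]
  rw [sum_snoc]
  simp only [ltr_snoc_last, if_true, Bool.false_eq_true, if_false, Finset.sum_const_zero, add_zero]
  apply Finset.sum_congr rfl
  intro w _
  split_ifs with h
  · exact wt_snoc_true_of_v w b 0 (Or.inr h)
  · exact wt_snoc_true_of_h_zero w b (by omega) (by simpa using h)

/-- Removing a final `v`: if the previous letter is an `h`, then a descent at position `m + 1`
disappears, and that `h` is removed as well. -/
theorem ballotGFv_succ_succ (m b k : ℕ) :
    ballotGFv (m + 2) (b + 1) (k + 1) = ballotGFv (m + 1) b (k + 1) +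
      Polynomial.X ^ (m + 1) * if m + 1 ≤ 2 * b then ballotGF m b k else 0 := by
  have hH := ballotGF_succ m b k
  rw [← sub_eq_iff_eq_add'] at hH
  rw [← hH]
  simp only [ballotGFv, ballotGF]
  rw [sum_snoc]
  simp only [ltr_snoc_last, if_true, Bool.false_eq_true, if_false, Finset.sum_const_zero, add_zero]
  rw [← Finset.sum_sub_distrib, Finset.mul_sum, ← Finset.sum_add_distrib]
  apply Finset.sum_congr rfl
  intro w _
  split_ifs with h
  · rw [wt_snoc_true_of_v w b _ (Or.inr h)]; ring
  · rw [wt_snoc_true_of_h w b k (by omega) (by simpa using h)]; ring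

theorem wt_empty (w : Fin 0 → Bool) (k : ℕ) : wt w 0 k = if k = 0 then 1 else 0 := by
  have hB : IsBallot w := by
    intro i hi
    obtain rfl : i = 0 := by omega
    simp [pcnt]
  have hd : desW w = ∅ := by simp [desW]
  have hp : pcnt w true 0 = 0 := by simp [pcnt]
  rw [wt, hd, hp]
  rcases k with _ | k <;> simp [hB]

theorem ballotGFv_one (k : ℕ) : ballotGFv 1 1 k = if k = 0 then 1 else 0 := by
  simp only [ballotGFv]
  rw [sum_snoc]
  simp only [ltr_snoc_last, if_true, Bool.false_eq_true, if_false, Finset.sum_const_zero, add_zero]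
  rw [Fintype.sum_unique, wt_snoc_true_of_v _ 0 k (Or.inl rfl)]
  exact wt_empty _ k

/-! ### Closed forms -/

/-- The elementary symmetric polynomial `e_k(1, q, …, q^(n-1))`, which equals
`q^(k choose 2)` times the Gaussian binomial coefficient. -/
noncomputable def esq : ℕ → ℕ → Polynomial ℚ
  | _, 0 => 1
  | 0, _ + 1 => 0
  | n + 1, k + 1 => esq n (k + 1) + Polynomial.X ^ n * esq n k

/-- Closed form for ballot words with `a` steps `h` and `b + 1` steps `v`; the subtracted product
counts the pairs of sequences of valley coordinates that violate the ballot condition. -/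
noncomputable def clF (a b : ℕ) : ℕ → Polynomial ℚ
  | 0 => 1
  | k + 1 => Polynomial.X ^ (2 * k + 2) *
      (esq a (k + 1) * esq b (k + 1) - esq a (k + 2) * esq b k)

/-- Closed form for ballot words with `a` steps `h` and `b + 1` steps `v` that end in `v`. -/
noncomputable def clV : ℕ → ℕ → ℕ → Polynomial ℚ
  | 0, _, 0 => 1
  | 0, _, _ + 1 => 0
  | _ + 1, _, 0 => 0
  | a + 1, b, k + 1 => Polynomial.X ^ (2 * k + 2 + a) *
      (esq a k * esq b (k + 1) - esq a (k + 1) * esq b k)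

theorem esq_zero_right (n : ℕ) : esq n 0 = 1 := by cases n <;> rfl

theorem clF_zero (b k : ℕ) : clF 0 b k = clV 0 b k := by
  cases k <;> simp [clF, clV, esq]

theorem clF_succ (a b k : ℕ) : clF (a + 1) b k = clV (a + 1) b k + clF a b k := by
  cases k
  · simp [clF, clV]
  · simp only [clF, clV, esq]; ring

theorem clV_diag (b k : ℕ) : clV (b + 1) b k = 0 := by
  cases k
  · simp [clV]
  · simp only [clV]; ring

theorem clV_succ_zero (a b : ℕ) : clV a (b + 1) 0 = clV a b 0 := by cases a <;> rfl

theorem clV_succ_succ (a b k : ℕ) :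
    clV (a + 1) (b + 1) (k + 1) =
      clV (a + 1) b (k + 1) + Polynomial.X ^ (a + b + 2) * clF a b k := by
  cases k
  · simp only [clF, clV, esq, esq_zero_right]; ring
  · simp only [clF, clV, esq]; ring

/-- Both closed forms, by simultaneous induction on the length: the last-letter recurrences for words
match `clF_succ` and `clV_succ_succ`, and outside `a ≤ b + 1` both generating functions vanish. -/
theorem ballotGF_closed (m : ℕ) : ∀ a b k : ℕ, a + b = m → a ≤ b + 1 →
    ballotGFv (m + 1) (b + 1) k = clV a b k ∧ ballotGF (m + 1) (b + 1) k = clF a b k := by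
  induction m using Nat.strong_induction_on with
  | _ m ih =>
  intro a b k hab hle
  have hv : ballotGFv (m + 1) (b + 1) k = clV a b k := by
    rcases m with _ | m
    · obtain ⟨rfl, rfl⟩ : a = 0 ∧ b = 0 := by omega
      rw [ballotGFv_one]
      cases k <;> simp [clV]
    rcases Nat.lt_or_ge b a with h | h
    · -- On the diagonal the last step cannot be `v`.
      obtain rfl : a = b + 1 := by omega
      rw [clV_diag]
      cases k with
      | zero => rw [ballotGFv_succ_zero, ballotGFv_eq_zero 0 (by omega)]
      | succ k =>
        rw [ballotGFv_succ_succ, ballotGFv_eq_zero _ (by omega), if_neg (by omega)]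
        simp
    obtain ⟨b, rfl⟩ : ∃ c, b = c + 1 := ⟨b - 1, by omega⟩
    have h1 := fun k => (ih m (by omega) a b k (by omega) h).1
    cases k with
    | zero => rw [ballotGFv_succ_zero, h1, clV_succ_zero]
    | succ k =>
      rw [ballotGFv_succ_succ, h1, if_pos (by omega)]
      rcases a with _ | a
      · rw [ballotGF_eq_zero _ (by omega)]
        simp [clV]
      · obtain ⟨m, rfl⟩ : ∃ c, m = c + 1 := ⟨m - 1, by omega⟩
        rw [(ih m (by omega) a b k (by omega) (by omega)).2, clV_succ_succ]
        congr 3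
        omega
  refine ⟨hv, ?_⟩
  rw [ballotGF_succ, hv, if_pos (by omega)]
  rcases a with _ | a
  · rw [ballotGF_eq_zero _ (by omega), clF_zero, add_zero]
  · obtain ⟨m, rfl⟩ : ∃ c, m = c + 1 := ⟨m - 1, by omega⟩
    rw [(ih m (by omega) a b k (by omega) (by omega)).2, clF_succ]

/-! ### Gaussian binomial coefficients -/

theorem qInt_add (i j : ℕ) : qInt (i + j) = qInt i + Polynomial.X ^ i * qInt j := by
  simp only [qInt, Finset.sum_range_add, Finset.mul_sum, pow_add]

theorem esq_eq_zero (n : ℕ) : ∀ j, esq n (n + j + 1) = 0 := by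
  induction n with
  | zero => intro j; rw [Nat.zero_add]; rfl
  | succ n ih =>
    intro j
    rw [esq, show n + 1 + j + 1 = n + (j + 1) + 1 by ring, ih, show n + 1 + j = n + j + 1 by ring,
      ih]
    simp

/-- `e_k(1, q, …, q^(n-1)) = q^(k choose 2) qbinom(n,k)`, with denominators cleared. -/
theorem esq_mul (n : ℕ) : ∀ k j : ℕ, k + j = n →
    esq n k * (qFact k * qFact j) = Polynomial.X ^ (k.choose 2) * qFact n := by
  induction n with
  | zero =>
    intro k j h
    obtain ⟨rfl, rfl⟩ : k = 0 ∧ j = 0 := by omega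
    simp [esq, qFact]
  | succ n ih =>
    intro k j h
    rcases k with _ | k
    · obtain rfl : j = n + 1 := by omega
      simp [esq, qFact]
    have hc : (k + 1).choose 2 = k + k.choose 2 := by
      rw [Nat.choose_succ_succ' k 1, Nat.choose_one_right]
    have h2 := ih k j (by omega)
    have hq : qInt (n + 1) = qInt j + Polynomial.X ^ j * qInt (k + 1) := by
      rw [← qInt_add]; congr 1; omega
    have hn : n = k + j := by omega
    rw [esq]
    rcases j with _ | j
    · have h0 : esq n (k + 1) = 0 := by
        obtain rfl : n = k := by omega
        exact esq_eq_zero n 0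
      have h3 : qInt 0 = 0 := by simp [qInt]
      rw [h3] at hq
      rw [hc, h0, qFact.eq_2 n, qFact.eq_2 k, hq]
      rw [show (Polynomial.X : Polynomial ℚ) ^ n = Polynomial.X ^ k by rw [hn, add_zero]]
      linear_combination (Polynomial.X ^ k * qInt (k + 1)) * h2
    · have h1 := ih (k + 1) j (by omega)
      rw [hc] at h1
      rw [hc, qFact.eq_2 n, hq, qFact.eq_2 k, qFact.eq_2 j]
      rw [qFact.eq_2 k] at h1
      rw [qFact.eq_2 j] at h2
      rw [show (Polynomial.X : Polynomial ℚ) ^ n = Polynomial.X ^ k * Polynomial.X ^ (j + 1) by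
        rw [hn, pow_add]]
      linear_combination qInt (j + 1) * h1 +
        (Polynomial.X ^ k * Polynomial.X ^ (j + 1) * qInt (k + 1)) * h2

theorem qInt_ne_zero (m : ℕ) : qInt (m + 1) ≠ 0 := by
  intro h
  have := congrArg (Polynomial.eval 1) h
  simp [qInt, Polynomial.eval_finsetSum] at this
  norm_cast at this

theorem qFact_ne_zero (m : ℕ) : qFact m ≠ 0 := by
  induction m with
  | zero => simp [qFact]
  | succ m ih => rw [qFact]; exact mul_ne_zero (qInt_ne_zero m) ih

theorem toRF_mul (p r : Polynomial ℚ) : toRF (p * r) = toRF p * toRF r := map_mul _ _ _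

theorem toRF_ne_zero {p : Polynomial ℚ} (h : p ≠ 0) : toRF p ≠ 0 :=
  RatFunc.algebraMap_ne_zero h

/-- The difference of products in `clF` on the diagonal collapses because
`[k+1]_q - q [k]_q = 1`. -/
theorem clF_diag_mul (k j : ℕ) :
    clF (k + j + 1) (k + j) k * (qFact k * qFact (j + 1) * (qFact (k + 1) * qFact j)) =
      qFact (k + j) * qFact (k + j + 1) * Polynomial.X ^ (k ^ 2 + k) := by
  rcases k with _ | k
  · simp only [clF, qFact, Nat.zero_add]
    simp [qInt]
    ring
  have hc : ∀ k : ℕ, (k + 1).choose 2 = k + k.choose 2 := fun k => by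
    rw [Nat.choose_succ_succ' k 1, Nat.choose_one_right]
  have hsq : ∀ k : ℕ, 2 * k.choose 2 + k = k ^ 2 := by
    intro k
    induction k with
    | zero => rfl
    | succ k ih => rw [hc]; nlinarith
  have e1 := esq_mul (k + 1 + j + 1) (k + 1) (j + 1) (by ring)
  have e2 := esq_mul (k + 1 + j) (k + 1) j rfl
  have e3 := esq_mul (k + 1 + j + 1) (k + 2) j (by ring)
  have e4 := esq_mul (k + 1 + j) k (j + 1) (by ring)
  have hX : (Polynomial.X : Polynomial ℚ) ^ ((k + 1) ^ 2 + (k + 1)) =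
      Polynomial.X ^ (2 * k + 2) * Polynomial.X ^ (2 * (k + k.choose 2)) := by
    rw [← pow_add, ← hsq (k + 1), hc]; congr 1; ring
  have hq : qInt (k + 2) = 1 + Polynomial.X * qInt (k + 1) := by
    have := qInt_add 1 (k + 1)
    rw [show 1 + (k + 1) = k + 2 by ring] at this
    rw [this]; simp [qInt]
  have f1 : qFact (k + 1) = qInt (k + 1) * qFact k := rfl
  have f2 : qFact (k + 2) = qInt (k + 2) * qFact (k + 1) := rfl
  rw [hc (k + 1), hc k] at e3
  rw [hc k] at e1 e2
  rw [hX, clF]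
  generalize qFact (k + 1 + j) = A at *
  generalize qFact (k + 1 + j + 1) = B at *
  generalize esq (k + 1 + j + 1) (k + 1) = E1 at *
  generalize esq (k + 1 + j) (k + 1) = E2 at *
  generalize esq (k + 1 + j + 1) (k + 2) = E3 at *
  generalize esq (k + 1 + j) k = E4 at *
  have m12 : E1 * (qFact (k + 1) * qFact (j + 1)) * (E2 * (qFact (k + 1) * qFact j)) =
      Polynomial.X ^ (k + k.choose 2) * B * (Polynomial.X ^ (k + k.choose 2) * A) := by
    rw [e1, e2]
  have m34 : E3 * (qFact (k + 2) * qFact j) * (E4 * (qFact k * qFact (j + 1))) =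
      Polynomial.X ^ (k + 1 + (k + k.choose 2)) * B * (Polynomial.X ^ (k.choose 2) * A) := by
    rw [e3, e4]
  rw [show k + 1 + 1 = k + 2 from rfl]
  rw [f2, hq] at *
  rw [f1] at *
  linear_combination (Polynomial.X ^ (2 * k + 2)) *
    ((1 + Polynomial.X * qInt (k + 1)) * m12 - qInt (k + 1) * m34)

theorem sum_dyck_eq_ballotGF (n k : ℕ) :
    (∑ w ∈ Finset.univ.filter
        (fun w : Fin (2 * n) → Bool => IsDyck n w ∧ (Des w).card = k),
        (Polynomial.X : Polynomial ℚ) ^ (∑ i ∈ Des w, i)) = ballotGF (2 * n) n k := by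
  rw [Finset.sum_filter, ballotGF]
  apply Finset.sum_congr rfl
  intro w _
  have hD : Des w = desW w := rfl
  have hI : IsDyck n w ↔ pcnt w true (2 * n) = n ∧ IsBallot w := Iff.rfl
  rw [wt, hD]
  exact if_congr (by rw [hI]; tauto) rfl rfl

/-- Fürlinger–Hofbauer–MacMahon: for `n ≥ 1` and `0 ≤ k ≤ n-1`,
`Σ_{w ∈ 𝒟_n, des w = k} q^(maj w) = (1/[n]) [n choose k]_q [n choose k+1]_q q^(k²+k)`. -/
theorem qNarayana_formula (n k : ℕ) (hn : 1 ≤ n) (hk : k ≤ n - 1) :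
    toRF (∑ w ∈ Finset.univ.filter
        (fun w : Fin (2 * n) → Bool => IsDyck n w ∧ (Des w).card = k),
        (Polynomial.X : Polynomial ℚ) ^ (∑ i ∈ Des w, i)) =
      (1 / toRF (qInt n)) * qbinom n k * qbinom n (k + 1) *
        toRF (Polynomial.X ^ (k ^ 2 + k)) := by
  obtain ⟨j, rfl⟩ : ∃ j, n = k + j + 1 := ⟨n - 1 - k, by omega⟩
  have hcl := (ballotGF_closed (k + j + 1 + (k + j)) (k + j + 1) (k + j) k rfl le_rfl).2
  rw [sum_dyck_eq_ballotGF, show 2 * (k + j + 1) = k + j + 1 + (k + j) + 1 by ring, hcl,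
    qbinom, qbinom, show k + j + 1 - k = j + 1 by omega, show k + j + 1 - (k + 1) = j by omega]
  have h := congrArg toRF (clF_diag_mul k j)
  simp only [toRF_mul] at h
  have hn : toRF (qFact (k + j + 1)) = toRF (qInt (k + j + 1)) * toRF (qFact (k + j)) := by
    rw [← toRF_mul]; rfl
  have h0 := toRF_ne_zero (qInt_ne_zero (k + j))
  have h1 := toRF_ne_zero (qFact_ne_zero k)
  have h2 := toRF_ne_zero (qFact_ne_zero (k + 1))
  have h3 := toRF_ne_zero (qFact_ne_zero j)
  have h4 := toRF_ne_zero (qFact_ne_zero (j + 1))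
  rw [hn] at h ⊢
  field_simp
  linear_combination h
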